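/- Let J := (1/π)·∫_0^π cos(cos t) dt, k_a := 2(cos 1 − J)/(cos 1 − sin 1), and k_b := (1 − J)/(1 − sin 1). Then (√2·sin(√2/2) − sin 1)·(k_a − k_b) ≤ 9.6·10⁻⁴. -/

import Mathlib

open Real MeasureTheory intervalIntegral

lemma aux_exp (x : ℝ) (hx : |x| ≤ 1) :
    ‖Complex.exp (x * Complex.I) - ∑ m ∈ Finset.range 12, (x * Complex.I) ^ m / (m.factorial : ℂ)‖
      ≤ 1 / 100000000 := by
  have h1 : ‖(x * Complex.I : ℂ)‖ ≤ 1 := by simpa using hx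
  refine (Complex.exp_bound h1 (n := 12) (by norm_num)).trans ?_
  have h2 : ‖(x * Complex.I : ℂ)‖ ^ 12 ≤ 1 := pow_le_one₀ (norm_nonneg _) h1
  refine (mul_le_mul_of_nonneg_right h2 (by positivity)).trans ?_
  norm_num [Nat.factorial]

lemma aux_sum (x : ℝ) : ∑ m ∈ Finset.range 12, (x * Complex.I) ^ m / (m.factorial : ℂ)
    = ((1 - x^2/2 + x^4/24 - x^6/720 + x^8/40320 - x^10/3628800 : ℝ) : ℂ)
      + ((x - x^3/6 + x^5/120 - x^7/5040 + x^9/362880 - x^11/39916800 : ℝ) : ℂ) * Complex.I := by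
  have hI : Complex.I ^ 2 = -1 := Complex.I_sq
  simp only [Finset.sum_range_succ, Finset.sum_range_zero, Nat.factorial]
  push_cast
  have h3 : Complex.I ^ 3 = -Complex.I := by rw [pow_succ, hI]; ring
  have h4 : Complex.I ^ 4 = 1 := Complex.I_pow_four
  have h5 : Complex.I ^ 5 = Complex.I := by rw [pow_succ, h4]; ring
  have h6 : Complex.I ^ 6 = -1 := by rw [pow_succ, h5, ← sq, hI]
  have h7 : Complex.I ^ 7 = -Complex.I := by rw [pow_succ, h6]; ring
  have h8 : Complex.I ^ 8 = 1 := by rw [pow_succ, h7, neg_mul, ← sq, hI]; ring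
  have h9 : Complex.I ^ 9 = Complex.I := by rw [pow_succ, h8]; ring
  have h10 : Complex.I ^ 10 = -1 := by rw [pow_succ, h9, ← sq, hI]
  have h11 : Complex.I ^ 11 = -Complex.I := by rw [pow_succ, h10]; ring
  simp only [mul_pow, hI, h3, h4, h5, h6, h7, h8, h9, h10, h11]
  ring

lemma aux_cos (x : ℝ) (hx : |x| ≤ 1) :
    |Real.cos x - (1 - x^2/2 + x^4/24 - x^6/720 + x^8/40320 - x^10/3628800)| ≤ 1 / 100000000 := by
  have h := (Complex.abs_re_le_norm _).trans (aux_exp x hx)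
  rw [aux_sum, Complex.sub_re, Complex.exp_ofReal_mul_I_re, Complex.add_re, Complex.ofReal_re,
    Complex.re_ofReal_mul, Complex.I_re, mul_zero, add_zero] at h
  exact h

lemma aux_sin (x : ℝ) (hx : |x| ≤ 1) :
    |Real.sin x - (x - x^3/6 + x^5/120 - x^7/5040 + x^9/362880 - x^11/39916800)|
      ≤ 1 / 100000000 := by
  have h := (Complex.abs_im_le_norm _).trans (aux_exp x hx)
  rw [aux_sum, Complex.sub_im, Complex.exp_ofReal_mul_I_im, Complex.add_im, Complex.ofReal_im,
    Complex.im_ofReal_mul, Complex.I_im, mul_one, zero_add] at h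
  exact h

lemma aux_J : (1 / π) * ∫ t in (0:ℝ)..π, Real.cos (Real.cos t) ≤ 0.7651978 := by
  have e2 : ∫ t in (0:ℝ)..π, Real.cos t ^ 2 = π / 2 := by
    rw [integral_cos_pow (n := 0)]; simp; ring
  have e4 : ∫ t in (0:ℝ)..π, Real.cos t ^ 4 = 3 * π / 8 := by
    rw [integral_cos_pow (n := 2), e2]; simp; ring
  have e6 : ∫ t in (0:ℝ)..π, Real.cos t ^ 6 = 5 * π / 16 := by
    rw [integral_cos_pow (n := 4), e4]; simp; ring
  have e8 : ∫ t in (0:ℝ)..π, Real.cos t ^ 8 = 35 * π / 128 := by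
    rw [integral_cos_pow (n := 6), e6]; simp; ring
  have e10 : ∫ t in (0:ℝ)..π, Real.cos t ^ 10 = 63 * π / 256 := by
    rw [integral_cos_pow (n := 8), e8]; simp; ring
  have hi : ∀ (n : ℕ) (c : ℝ),
      IntervalIntegrable (fun t => Real.cos t ^ n / c) volume 0 π := fun n c =>
    Continuous.intervalIntegrable (by fun_prop) _ _
  have hc : ∀ c : ℝ, IntervalIntegrable (fun _ : ℝ => c) volume 0 π := fun c =>
    Continuous.intervalIntegrable (by fun_prop) _ _
  have key : ∫ t in (0:ℝ)..π, Real.cos (Real.cos t) ≤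
      ∫ t in (0:ℝ)..π, ((1 + 1/100000000) - Real.cos t^2/2 + Real.cos t^4/24 - Real.cos t^6/720
        + Real.cos t^8/40320 - Real.cos t^10/3628800) := by
    apply intervalIntegral.integral_mono_on pi_pos.le
    · exact Continuous.intervalIntegrable (by fun_prop) _ _
    · exact Continuous.intervalIntegrable (by fun_prop) _ _
    · intro t _
      have := (abs_le.1 (aux_cos (Real.cos t) (abs_cos_le_one t))).2
      linarith
  have ev : ∫ t in (0:ℝ)..π, ((1 + 1/100000000) - Real.cos t^2/2 + Real.cos t^4/24
        - Real.cos t^6/720 + Real.cos t^8/40320 - Real.cos t^10/3628800) =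
      π * ((1 + 1/100000000) - 1/4 + 3/192 - 5/11520 + 35/5160960 - 63/928972800) := by
    rw [intervalIntegral.integral_sub (((((hc _).sub (hi _ _)).add (hi _ _)).sub (hi _ _)).add (hi _ _)) (hi _ _),
      intervalIntegral.integral_add ((((hc _).sub (hi _ _)).add (hi _ _)).sub (hi _ _)) (hi _ _),
      intervalIntegral.integral_sub (((hc _).sub (hi _ _)).add (hi _ _)) (hi _ _),
      intervalIntegral.integral_add ((hc _).sub (hi _ _)) (hi _ _),
      intervalIntegral.integral_sub (hc _) (hi _ _)]
    simp only [intervalIntegral.integral_div, e2, e4, e6, e8, e10,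
      intervalIntegral.integral_const, smul_eq_mul]
    ring
  rw [ev] at key
  rw [one_div, inv_mul_le_iff₀ pi_pos]
  refine key.trans (mul_le_mul_of_nonneg_left (by norm_num) pi_pos.le)

theorem stmt_18 (J ka kb : ℝ)
    (hJ : J = (1 / π) * ∫ t in (0:ℝ)..π, Real.cos (Real.cos t))
    (hka : ka = 2 * (Real.cos 1 - J) / (Real.cos 1 - Real.sin 1))
    (hkb : kb = (1 - J) / (1 - Real.sin 1)) :
    (Real.sqrt 2 * Real.sin (Real.sqrt 2 / 2) - Real.sin 1) * (ka - kb) ≤ 9.6 * 10 ^ (-4 : ℤ) := by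
  have hJ1 : J ≤ 0.7651978 := hJ ▸ aux_J
  obtain ⟨c1, c2⟩ := abs_le.1 (aux_cos 1 (by norm_num))
  obtain ⟨s1, s2⟩ := abs_le.1 (aux_sin 1 (by norm_num))
  have q2 : Real.sqrt 2 ^ 2 = 2 := Real.sq_sqrt (by norm_num)
  have q0 : 0 ≤ Real.sqrt 2 := Real.sqrt_nonneg 2
  have q3 : Real.sqrt 2 ≤ 2 := by nlinarith
  obtain ⟨r1, r2⟩ := abs_le.1 (aux_sin (Real.sqrt 2 / 2) (by rw [abs_of_nonneg] <;> linarith))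
  have r1' := mul_le_mul_of_nonneg_left r1 q0
  have r2' := mul_le_mul_of_nonneg_left r2 q0
  have hp : Real.sqrt 2 * (Real.sin (Real.sqrt 2 / 2) - (Real.sqrt 2 / 2 - (Real.sqrt 2 / 2)^3/6
      + (Real.sqrt 2 / 2)^5/120 - (Real.sqrt 2 / 2)^7/5040 + (Real.sqrt 2 / 2)^9/362880
      - (Real.sqrt 2 / 2)^11/39916800)) = Real.sqrt 2 * Real.sin (Real.sqrt 2 / 2)
      - (1 - 1/12 + 1/480 - 1/40320 + 1/5806080 - 1/(32*39916800)) := by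
    have : ∀ q : ℝ, q * (q / 2 - (q / 2)^3/6
      + (q / 2)^5/120 - (q / 2)^7/5040 + (q / 2)^9/362880 - (q / 2)^11/39916800)
      = q^2/2 - (q^2)^2/48 + (q^2)^3/3840 - (q^2)^4/(5040*128) + (q^2)^5/(362880*512)
        - (q^2)^6/(39916800*2048) := fun q => by ring
    rw [mul_sub, this, q2]
    norm_num
  rw [hp] at r1' r2'
  generalize Real.sqrt 2 * Real.sin (Real.sqrt 2 / 2) = A at *
  generalize Real.sin 1 = s at *
  generalize Real.cos 1 = c at *
  norm_num at c1 c2 s1 s2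
  have hA1 : 0 ≤ A - s := by linarith
  have hA2 : A - s ≤ 0.077255 := by linarith
  have hk1 : ka ≤ 1.493486 := by
    have : ka = 2 * (J - c) / (s - c) := by
      rw [hka, ← neg_div_neg_eq]; congr 1 <;> ring
    rw [this, div_le_iff₀ (by linarith)]
    linarith
  have hk2 : 1.48113 ≤ kb := by
    rw [hkb, le_div_iff₀ (by linarith)]
    linarith
  calc (A - s) * (ka - kb) ≤ (A - s) * 0.01236 :=
        mul_le_mul_of_nonneg_left (by linarith) hA1
    _ ≤ 0.077255 * 0.01236 := mul_le_mul_of_nonneg_right hA2 (by norm_num)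
    _ ≤ _ := by norm_num
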